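/- Let f be a locally integrable function on the open unit disc satisfying the VWMO condition. Then the function f − f̂ satisfies the vanishing averaging condition (4a): lim_{|z|→1} (1/|B(z)|) · sup_{ζ∈B(z)} |∫_{B(z,ζ)} (f(ξ) − f̂(ξ)) dA(ξ)| = 0. -/

import Mathlib

open MeasureTheory Set

noncomputable section

/-- The normalized area measure on the plane: planar Lebesgue measure divided by `π`. -/
def dA : Measure ℂ := (ENNReal.ofReal Real.pi)⁻¹ • volume

/-- The open unit disc `𝔻`. -/
def unitDisc : Set ℂ := {z : ℂ | ‖z‖ < 1}

/-- The argument `θ` of `z`, normalized to lie in `[0, 2π)`. -/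
def theta (z : ℂ) : ℝ := toIcoMod Real.two_pi_pos 0 (Complex.arg z)

/-- The angle of `ζ`, normalized to lie in `[theta z, theta z + 2π)`;
for `ζ ∈ B(z)` this is the angle `θ̃ ∈ [θ, θ + π(1-r)]` of the paper's convention. -/
def angFrom (z ζ : ℂ) : ℝ := toIcoMod Real.two_pi_pos (theta z) (Complex.arg ζ)

/-- The polar rectangle `{ρ e^{iφ} : r₁ ≤ ρ ≤ r₂, φ₁ ≤ φ ≤ φ₂}`. -/
def polarRect (r₁ r₂ φ₁ φ₂ : ℝ) : Set ℂ :=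
  {w : ℂ | ∃ ρ φ : ℝ, r₁ ≤ ρ ∧ ρ ≤ r₂ ∧ φ₁ ≤ φ ∧ φ ≤ φ₂ ∧
    w = (ρ : ℂ) * Complex.exp ((φ : ℂ) * Complex.I)}

/-- The set `B(z)` for `z = r e^{iθ} ∈ 𝔻`. -/
def Bz (z : ℂ) : Set ℂ :=
  polarRect ‖z‖ (1 - (1 - ‖z‖) / 2) (theta z) (theta z + Real.pi * (1 - ‖z‖))

/-- The set `B(z, ζ)` for `ζ ∈ B(z)`. -/
def Bzz (z ζ : ℂ) : Set ℂ := polarRect ‖z‖ ‖ζ‖ (theta z) (angFrom z ζ)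

/-- The set `B(ζ₁, ζ₂)` for points `ζ₁ ≾ ζ₂` of `B(z)`. -/
def Bsub (z ζ₁ ζ₂ : ℂ) : Set ℂ := polarRect ‖ζ₁‖ ‖ζ₂‖ (angFrom z ζ₁) (angFrom z ζ₂)

/-- The relation `ζ₁ ≾ ζ₂` for points of `B(z)`: `ρ₁ ≤ ρ₂` and `φ₁ ≤ φ₂`. -/
def precSim (z ζ₁ ζ₂ : ℂ) : Prop := ‖ζ₁‖ ≤ ‖ζ₂‖ ∧ angFrom z ζ₁ ≤ angFrom z ζ₂

/-- The average `f̂_K = (1/|K|) ∫_K f dA` of `f` over a set `K`. -/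
def avgOn (f : ℂ → ℂ) (K : Set ℂ) : ℂ := ((dA K).toReal)⁻¹ • ∫ w in K, f w ∂dA

/-- The average function `f̂(z) = f̂_{B(z)}`. -/
def avg (f : ℂ → ℂ) (z : ℂ) : ℂ := avgOn f (Bz z)

/-- The quantity `(1/|B(z)|) |∫_{B(z,ζ)} (f(ξ) - f̂(z)) dA(ξ)|`. -/
def wQuot (f : ℂ → ℂ) (z ζ : ℂ) : ℝ :=
  ((dA (Bz z)).toReal)⁻¹ * ‖∫ ξ in Bzz z ζ, (f ξ - avg f z) ∂dA‖

/-- The BWMO condition: `‖f‖_BWMO < ∞`. -/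
def IsBWMO (f : ℂ → ℂ) : Prop := ∃ C : ℝ, ∀ z ∈ unitDisc, ∀ ζ ∈ Bz z, wQuot f z ζ ≤ C

/-- The BWMO seminorm `‖f‖_BWMO`. -/
def bwmoNorm (f : ℂ → ℂ) : ℝ :=
  sSup {c : ℝ | ∃ z ∈ unitDisc, ∃ ζ ∈ Bz z, c = wQuot f z ζ}

/-- The VWMO condition:
`(1/|B(z)|) sup_{ζ ∈ B(z)} |∫_{B(z,ζ)} (f - f̂(z)) dA| → 0` as `|z| → 1`. -/
def IsVWMO (f : ℂ → ℂ) : Prop :=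
  ∀ ε > (0:ℝ), ∃ r₀ < (1:ℝ), ∀ z ∈ unitDisc, r₀ ≤ ‖z‖ → ∀ ζ ∈ Bz z, wQuot f z ζ ≤ ε

/-- The Bergman-metric disc `D(z,1)` of radius `1` centered at `z`. -/
def Dball (z : ℂ) : Set ℂ :=
  {w : ℂ | ‖w‖ < 1 ∧ ‖(z - w) / (1 - (starRingEnd ℂ) w * z)‖ < Real.tanh 1}

/-- The hyperbolic average `f̂₁(z) = (1/|D(z,1)|) ∫_{D(z,1)} f dA` of a real-valued `f`. -/
def avg1 (f : ℂ → ℝ) (z : ℂ) : ℝ := ((dA (Dball z)).toReal)⁻¹ * ∫ w in Dball z, f w ∂dA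

/-- The mean oscillation `(1/|D(z,1)|) ∫_{D(z,1)} |f - f̂₁(z)| dA` of a real-valued `f`. -/
def meanOsc1 (f : ℂ → ℝ) (z : ℂ) : ℝ :=
  ((dA (Dball z)).toReal)⁻¹ * ∫ ξ in Dball z, |f ξ - avg1 f z| ∂dA

/-- The Berezin transform `f̃(z) = ∫_𝔻 f(w) |k_z(w)|² dA(w)`,
where `k_z(w) = (1-|z|²)/(1-w z̄)²`. -/
def berezin (f : ℂ → ℂ) (z : ℂ) : ℂ :=
  ∫ w in unitDisc, f w * ((((1 - ‖z‖ ^ 2) ^ 2 / ‖1 - w * (starRingEnd ℂ) z‖ ^ 4 : ℝ)) : ℂ) ∂dA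

/-- The example symbol of Section 4:
`f(r e^{iθ}) = (1/(r (1-r)^{b-β})) sin(1/(1-r)^b)` for `r ≥ 1/2`, and `1` for `r < 1/2`. -/
def fEx (b β : ℝ) (z : ℂ) : ℝ :=
  if ‖z‖ < 1 / 2 then 1
  else (1 / (‖z‖ * (1 - ‖z‖) ^ (b - β))) * Real.sin (1 / (1 - ‖z‖) ^ b)

end

/-!
By inclusion-exclusion over rectangles with a corner at `z`, the VWMO condition bounds
`|∫_R (f - f̂(z))| ≤ 4 ε |B(z)|` for every polar rectangle `R ⊆ B(z)`. If two boxes `B(z)` and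
`B(w)` share a rectangle `R` of comparable area, this forces `|f̂(z) - f̂(w)| ≤ C ε`. Every
`w ∈ B(z)` is reached from `z` through two such overlaps, so `f̂` oscillates by `O(ε)` on `B(z)`
and `f̂(z)` may be replaced by `f̂(ξ)` under the integral. The new integrand is integrable because
`f̂` is measurable, by Fubini's theorem on `{(z, w) : w ∈ B(z)}`.
-/

section PolarRectangles

lemma toIcoMod_arg_circleMap {ρ : ℝ} (hρ : 0 < ρ) (α φ : ℝ) :
    toIcoMod Real.two_pi_pos α (circleMap 0 ρ φ).arg = toIcoMod Real.two_pi_pos α φ := by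
  rw [circleMap_zero, Complex.arg_real_mul _ hρ, Complex.arg_exp_mul_I, toIcoMod_toIocMod]

lemma circleMap_sub_zsmul_two_pi (ρ φ : ℝ) (n : ℤ) :
    circleMap 0 ρ (φ - n • (2 * Real.pi)) = circleMap 0 ρ φ :=
  (periodic_circleMap 0 ρ).sub_zsmul_eq n

lemma circleMap_norm_toIcoMod_arg (α : ℝ) (w : ℂ) :
    circleMap 0 ‖w‖ (toIcoMod Real.two_pi_pos α w.arg) = w := by
  rw [← self_sub_toIcoDiv_zsmul, circleMap_sub_zsmul_two_pi, circleMap_zero,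
    Complex.norm_mul_exp_arg_mul_I]

lemma injOn_circleMap_sector (α : ℝ) :
    InjOn (fun p : ℝ × ℝ ↦ circleMap 0 p.1 p.2) (Ioi 0 ×ˢ Ico α (α + 2 * Real.pi)) := by
  refine LeftInvOn.injOn (f₁' := fun w ↦ (‖w‖, toIcoMod Real.two_pi_pos α w.arg)) ?_
  rintro ⟨ρ, φ⟩ ⟨hρ, hφ⟩
  simp only [toIcoMod_arg_circleMap hρ, (toIcoMod_eq_self Real.two_pi_pos).2 hφ,
    norm_circleMap_zero, abs_of_pos (mem_Ioi.1 hρ)]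

lemma Icc_prod_Icc_subset_sector {a b α β θ : ℝ} (ha : 0 < a) (hα : θ ≤ α)
    (hβ : β < θ + 2 * Real.pi) : Icc a b ×ˢ Icc α β ⊆ Ioi 0 ×ˢ Ico θ (θ + 2 * Real.pi) :=
  prod_mono (fun _ h ↦ ha.trans_le h.1) (fun _ h ↦ ⟨hα.trans h.1, h.2.trans_lt hβ⟩)

lemma polarRect_eq_image (a b α β : ℝ) :
    polarRect a b α β = (fun p : ℝ × ℝ ↦ circleMap 0 p.1 p.2) '' (Icc a b ×ˢ Icc α β) := by
  ext w
  simp only [polarRect, circleMap_zero, mem_ofPred_eq, mem_image, Prod.exists, mem_prod, mem_Icc]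
  grind

lemma circleMap_mem_polarRect {a b α β ρ φ : ℝ} (hρ : ρ ∈ Icc a b) (hφ : φ ∈ Icc α β) :
    circleMap 0 ρ φ ∈ polarRect a b α β := by
  rw [polarRect_eq_image]
  exact ⟨(ρ, φ), ⟨hρ, hφ⟩, rfl⟩

lemma mem_polarRect_iff {a b α β : ℝ} (ha : 0 < a) (hβ : β < α + 2 * Real.pi) {w : ℂ} :
    w ∈ polarRect a b α β ↔ ‖w‖ ∈ Icc a b ∧ toIcoMod Real.two_pi_pos α w.arg ≤ β := by
  rw [polarRect_eq_image]
  constructor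
  · rintro ⟨⟨ρ, φ⟩, ⟨hρ, hφ⟩, rfl⟩
    have hρ0 : 0 < ρ := ha.trans_le hρ.1
    have hφα : toIcoMod Real.two_pi_pos α φ = φ :=
      (toIcoMod_eq_self _).2 ⟨hφ.1, hφ.2.trans_lt hβ⟩
    simpa only [norm_circleMap_zero, abs_of_pos hρ0, toIcoMod_arg_circleMap hρ0, hφα]
      using ⟨hρ, hφ.2⟩
  · rintro ⟨hw, hle⟩
    exact ⟨(‖w‖, toIcoMod Real.two_pi_pos α w.arg), ⟨hw, left_le_toIcoMod _ _ _, hle⟩,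
      circleMap_norm_toIcoMod_arg α w⟩

lemma polarRect_sub_zsmul_two_pi (a b α β : ℝ) (n : ℤ) :
    polarRect a b (α - n • (2 * Real.pi)) (β - n • (2 * Real.pi)) = polarRect a b α β := by
  ext w
  simp only [polarRect_eq_image, mem_image, Prod.exists, mem_prod]
  constructor
  · rintro ⟨ρ, φ, ⟨hρ, hφ⟩, rfl⟩
    refine ⟨ρ, φ + n • (2 * Real.pi), ⟨hρ, ?_⟩, (periodic_circleMap 0 ρ).zsmul n φ⟩
    exact ⟨sub_le_iff_le_add.1 hφ.1, le_sub_iff_add_le.1 hφ.2⟩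
  · rintro ⟨ρ, φ, ⟨hρ, hφ⟩, rfl⟩
    exact ⟨ρ, φ - n • (2 * Real.pi), ⟨hρ, sub_le_sub_right hφ.1 _, sub_le_sub_right hφ.2 _⟩,
      circleMap_sub_zsmul_two_pi ρ φ n⟩

lemma isCompact_polarRect (a b α β : ℝ) : IsCompact (polarRect a b α β) := by
  rw [polarRect_eq_image]
  exact (isCompact_Icc.prod isCompact_Icc).image (by simp only [circleMap]; fun_prop)

lemma measurableSet_polarRect (a b α β : ℝ) : MeasurableSet (polarRect a b α β) :=
  (isCompact_polarRect a b α β).measurableSet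

lemma polarRect_subset_polarRect {a b α β a' b' α' β' : ℝ} (ha : a' ≤ a) (hb : b ≤ b')
    (hα : α' ≤ α) (hβ : β ≤ β') : polarRect a b α β ⊆ polarRect a' b' α' β' := by
  simp only [polarRect_eq_image]
  exact image_mono (prod_mono (Icc_subset_Icc ha hb) (Icc_subset_Icc hα hβ))

lemma polarRect_union_radial {a b c : ℝ} (hab : a ≤ b) (hbc : b ≤ c) (α β : ℝ) :
    polarRect a b α β ∪ polarRect b c α β = polarRect a c α β := by
  simp only [polarRect_eq_image, ← image_union, ← union_prod, Icc_union_Icc_eq_Icc hab hbc]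

lemma polarRect_union_angular (a b : ℝ) {α β γ : ℝ} (hαβ : α ≤ β) (hβγ : β ≤ γ) :
    polarRect a b α β ∪ polarRect a b β γ = polarRect a b α γ := by
  simp only [polarRect_eq_image, ← image_union, ← prod_union, Icc_union_Icc_eq_Icc hαβ hβγ]

lemma polarRect_inter {a b α β a' b' α' β' θ : ℝ} (ha : 0 < a) (ha' : 0 < a') (hα : θ ≤ α)
    (hα' : θ ≤ α') (hβ : β < θ + 2 * Real.pi) (hβ' : β' < θ + 2 * Real.pi) :
    polarRect a b α β ∩ polarRect a' b' α' β' =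
      polarRect (max a a') (min b b') (max α α') (min β β') := by
  simp only [polarRect_eq_image]
  rw [← (injOn_circleMap_sector θ).image_inter (Icc_prod_Icc_subset_sector ha hα hβ)
    (Icc_prod_Icc_subset_sector ha' hα' hβ'), prod_inter_prod, Icc_inter_Icc, Icc_inter_Icc]

lemma volume_image_polarCoord_symm {s : Set (ℝ × ℝ)} (hs : MeasurableSet s)
    (hinj : InjOn polarCoord.symm s) :
    volume (polarCoord.symm '' s) = ∫⁻ p in s, ENNReal.ofReal |p.1| := by
  rw [← lintegral_abs_det_fderiv_eq_addHaar_image volume hs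
    (fun p _ ↦ (hasFDerivAt_polarCoord_symm p).hasFDerivWithinAt) hinj]
  simp only [det_fderivPolarCoordSymm]

lemma measurableEquivRealProd_circleMap (p : ℝ × ℝ) :
    Complex.measurableEquivRealProd (circleMap 0 p.1 p.2) = polarCoord.symm p := by
  simp [Complex.measurableEquivRealProd_apply, polarCoord_symm_apply, circleMap_zero_re,
    circleMap_zero_im]

lemma volume_polarRect {a b α β : ℝ} (ha : 0 < a) (hab : a ≤ b) (hαβ : α ≤ β)
    (hβ : β < α + 2 * Real.pi) :
    volume (polarRect a b α β) = ENNReal.ofReal ((b ^ 2 - a ^ 2) / 2 * (β - α)) := by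
  have hsymm : (polarCoord.symm : ℝ × ℝ → ℝ × ℝ) =
      Complex.measurableEquivRealProd ∘ fun p ↦ circleMap 0 p.1 p.2 :=
    funext fun p ↦ (measurableEquivRealProd_circleMap p).symm
  have himage : polarCoord.symm '' (Icc a b ×ˢ Icc α β) =
      Complex.measurableEquivRealProd '' polarRect a b α β := by
    rw [hsymm, image_comp, polarRect_eq_image]
  have hinj : InjOn polarCoord.symm (Icc a b ×ˢ Icc α β) := by
    rw [hsymm]
    exact Complex.measurableEquivRealProd.injective.comp_injOn <|
      (injOn_circleMap_sector α).mono (Icc_prod_Icc_subset_sector ha le_rfl hβ)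
  have hrect : ∫ p in Icc a b ×ˢ Icc α β, |p.1| = (b ^ 2 - a ^ 2) / 2 * (β - α) := by
    have hρ : ∫ ρ in Icc a b, |ρ| = (b ^ 2 - a ^ 2) / 2 := by
      rw [setIntegral_congr_fun measurableSet_Icc fun ρ hρ ↦ abs_of_pos (ha.trans_le hρ.1),
        integral_Icc_eq_integral_Ioc, ← intervalIntegral.integral_of_le hab, integral_id]
    rw [Measure.volume_eq_prod]
    simpa [hρ, hαβ] using
      setIntegral_prod_mul (μ := volume) (ν := volume) (fun ρ : ℝ ↦ |ρ|) (fun _ : ℝ ↦ (1 : ℝ))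
        (Icc a b) (Icc α β)
  calc volume (polarRect a b α β)
      = volume (polarCoord.symm '' (Icc a b ×ˢ Icc α β)) := by
        rw [himage, ← Complex.volume_preserving_equiv_real_prod.measure_preimage_equiv,
          preimage_image_eq _ Complex.measurableEquivRealProd.injective]
    _ = ∫⁻ p in Icc a b ×ˢ Icc α β, ENNReal.ofReal |p.1| :=
        volume_image_polarCoord_symm (measurableSet_Icc.prod measurableSet_Icc) hinj
    _ = ENNReal.ofReal ((b ^ 2 - a ^ 2) / 2 * (β - α)) := by
        rw [← hrect, ofReal_integral_eq_lintegral_ofReal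
          (ContinuousOn.integrableOn_compact (isCompact_Icc.prod isCompact_Icc) (by fun_prop))
          (.of_forall fun p ↦ abs_nonneg p.1)]

instance : dA.IsAddHaarMeasure :=
  Measure.IsAddHaarMeasure.smul _ (by simp) (by simp [Real.pi_pos])

lemma measureReal_polarRect {a b α β : ℝ} (ha : 0 < a) (hab : a ≤ b) (hαβ : α ≤ β)
    (hβ : β < α + 2 * Real.pi) :
    dA.real (polarRect a b α β) = (b ^ 2 - a ^ 2) * (β - α) / (2 * Real.pi) := by
  have h0 : 0 ≤ (b ^ 2 - a ^ 2) / 2 * (β - α) :=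
    mul_nonneg (by nlinarith) (sub_nonneg.2 hαβ)
  rw [measureReal_def, dA, Measure.smul_apply, smul_eq_mul, volume_polarRect ha hab hαβ hβ,
    ENNReal.toReal_mul, ENNReal.toReal_inv, ENNReal.toReal_ofReal Real.pi_pos.le,
    ENNReal.toReal_ofReal h0]
  ring

end PolarRectangles

section RectangleIntegrals

variable {E : Type*} [NormedAddCommGroup E] [NormedSpace ℝ E] {g : ℂ → E}

lemma aedisjoint_polarRect_radial {a b c α β : ℝ} (ha : 0 < a) (hab : a ≤ b) (hbc : b ≤ c)
    (hαβ : α ≤ β) (hβ : β < α + 2 * Real.pi) :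
    AEDisjoint dA (polarRect a b α β) (polarRect b c α β) := by
  have hb : 0 < b := ha.trans_le hab
  rw [AEDisjoint, polarRect_inter ha hb le_rfl le_rfl hβ hβ, max_eq_right hab, min_eq_left hbc,
    max_self, min_self, ← measureReal_eq_zero_iff (isCompact_polarRect _ _ _ _).measure_ne_top,
    measureReal_polarRect hb le_rfl hαβ hβ]
  simp

lemma aedisjoint_polarRect_angular {a b α β γ : ℝ} (ha : 0 < a) (hab : a ≤ b) (hαβ : α ≤ β)
    (hβγ : β ≤ γ) (hγ : γ < α + 2 * Real.pi) :
    AEDisjoint dA (polarRect a b α β) (polarRect a b β γ) := by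
  rw [AEDisjoint, polarRect_inter ha ha le_rfl hαβ (hβγ.trans_lt hγ) hγ, max_self, min_self,
    max_eq_right hαβ, min_eq_left hβγ,
    ← measureReal_eq_zero_iff (isCompact_polarRect _ _ _ _).measure_ne_top,
    measureReal_polarRect ha hab le_rfl (lt_add_of_pos_right _ Real.two_pi_pos)]
  simp

lemma setIntegral_polarRect_radial_add {a b c α β : ℝ} (ha : 0 < a) (hab : a ≤ b) (hbc : b ≤ c)
    (hαβ : α ≤ β) (hβ : β < α + 2 * Real.pi) (hg : IntegrableOn g (polarRect a c α β) dA) :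
    (∫ w in polarRect a b α β, g w ∂dA) + ∫ w in polarRect b c α β, g w ∂dA =
      ∫ w in polarRect a c α β, g w ∂dA := by
  rw [← polarRect_union_radial hab hbc, integrableOn_union] at *
  exact (setIntegral_union₀ (aedisjoint_polarRect_radial ha hab hbc hαβ hβ)
    (measurableSet_polarRect ..).nullMeasurableSet hg.1 hg.2).symm

lemma setIntegral_polarRect_angular_add {a b α β γ : ℝ} (ha : 0 < a) (hab : a ≤ b)
    (hαβ : α ≤ β) (hβγ : β ≤ γ) (hγ : γ < α + 2 * Real.pi)
    (hg : IntegrableOn g (polarRect a b α γ) dA) :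
    (∫ w in polarRect a b α β, g w ∂dA) + ∫ w in polarRect a b β γ, g w ∂dA =
      ∫ w in polarRect a b α γ, g w ∂dA := by
  rw [← polarRect_union_angular a b hαβ hβγ, integrableOn_union] at *
  exact (setIntegral_union₀ (aedisjoint_polarRect_angular ha hab hαβ hβγ hγ)
    (measurableSet_polarRect ..).nullMeasurableSet hg.1 hg.2).symm

lemma setIntegral_polarRect_eq_corner_sub {a b c α β γ : ℝ} (ha : 0 < a) (hab : a ≤ b)
    (hbc : b ≤ c) (hαβ : α ≤ β) (hβγ : β ≤ γ) (hγ : γ < α + 2 * Real.pi)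
    (hg : IntegrableOn g (polarRect a c α γ) dA) :
    ∫ w in polarRect b c β γ, g w ∂dA =
      ((∫ w in polarRect a c α γ, g w ∂dA) - ∫ w in polarRect a b α γ, g w ∂dA) -
        ((∫ w in polarRect a c α β, g w ∂dA) - ∫ w in polarRect a b α β, g w ∂dA) := by
  have hαγ : α ≤ γ := hαβ.trans hβγ
  rw [← setIntegral_polarRect_radial_add ha hab hbc hαγ hγ hg,
    ← setIntegral_polarRect_radial_add ha hab hbc hαβ (hβγ.trans_lt hγ)
      (hg.mono_set (polarRect_subset_polarRect le_rfl le_rfl le_rfl hβγ)),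
    ← setIntegral_polarRect_angular_add (ha.trans_le hab) hbc hαβ hβγ hγ
      (hg.mono_set (polarRect_subset_polarRect hab le_rfl le_rfl le_rfl))]
  abel

/-- The constant `4` counts the corner rectangles in the inclusion-exclusion formula. -/
lemma norm_setIntegral_polarRect_le_of_corner {a b α β C : ℝ} (ha : 0 < a)
    (hβ : β < α + 2 * Real.pi) (hg : IntegrableOn g (polarRect a b α β) dA)
    (hcorner : ∀ ρ ∈ Icc a b, ∀ φ ∈ Icc α β, ‖∫ w in polarRect a ρ α φ, g w ∂dA‖ ≤ C)
    {a' b' α' β' : ℝ} (haa' : a ≤ a') (hab' : a' ≤ b') (hbb' : b' ≤ b) (hαα' : α ≤ α')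
    (hαβ' : α' ≤ β') (hββ' : β' ≤ β) :
    ‖∫ w in polarRect a' b' α' β', g w ∂dA‖ ≤ 4 * C := by
  rw [setIntegral_polarRect_eq_corner_sub ha haa' hab' hαα' hαβ' (hββ'.trans_lt hβ)
    (hg.mono_set (polarRect_subset_polarRect le_rfl hbb' le_rfl hββ'))]
  have ha' : a' ∈ Icc a b := ⟨haa', hab'.trans hbb'⟩
  have hb' : b' ∈ Icc a b := ⟨haa'.trans hab', hbb'⟩
  have hα' : α' ∈ Icc α β := ⟨hαα', hαβ'.trans hββ'⟩
  have hβ' : β' ∈ Icc α β := ⟨hαα'.trans hαβ', hββ'⟩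
  calc _ ≤ (C + C) + (C + C) :=
        norm_sub_le_of_le
          (norm_sub_le_of_le (hcorner b' hb' β' hβ') (hcorner a' ha' β' hβ'))
          (norm_sub_le_of_le (hcorner b' hb' α' hα') (hcorner a' ha' α' hα'))
    _ = 4 * C := by ring

lemma measureReal_mul_norm_sub_le_of_setIntegral_sub [CompleteSpace E] {X : Type*}
    [MeasurableSpace X] {μ : Measure X} {s : Set X} {h : X → E} {c c' : E} {C C' : ℝ}
    (hμ : μ s ≠ ⊤) (hh : IntegrableOn h s μ)
    (hc : ‖∫ x in s, (h x - c) ∂μ‖ ≤ C) (hc' : ‖∫ x in s, (h x - c') ∂μ‖ ≤ C') :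
    μ.real s * ‖c - c'‖ ≤ C + C' := by
  have hsub (v : E) : IntegrableOn (fun x ↦ h x - v) s μ := hh.sub (integrableOn_const hμ)
  have hdiff : (∫ x in s, (h x - c') ∂μ) - ∫ x in s, (h x - c) ∂μ = μ.real s • (c - c') := by
    rw [← integral_sub (hsub c') (hsub c)]
    simp only [sub_sub_sub_cancel_left, setIntegral_const]
  calc μ.real s * ‖c - c'‖ = ‖μ.real s • (c - c')‖ := by
        rw [norm_smul, Real.norm_of_nonneg measureReal_nonneg]
    _ ≤ C' + C := hdiff ▸ norm_sub_le_of_le hc' hc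
    _ = C + C' := add_comm _ _

end RectangleIntegrals

section Boxes

lemma circleMap_norm_theta (z : ℂ) : circleMap 0 ‖z‖ (theta z) = z :=
  circleMap_norm_toIcoMod_arg 0 z

lemma theta_circleMap {r : ℝ} (hr : 0 < r) (θ : ℝ) :
    theta (circleMap 0 r θ) = θ - toIcoDiv Real.two_pi_pos 0 θ • (2 * Real.pi) :=
  toIcoMod_arg_circleMap hr 0 θ

lemma Bz_circleMap {r : ℝ} (hr : 0 < r) (θ : ℝ) :
    Bz (circleMap 0 r θ) = polarRect r (1 - (1 - r) / 2) θ (θ + Real.pi * (1 - r)) := by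
  rw [Bz, norm_circleMap_zero, abs_of_pos hr, theta_circleMap hr, sub_add_eq_add_sub,
    polarRect_sub_zsmul_two_pi]

lemma angFrom_circleMap {r ρ θ φ : ℝ} (hr : 0 < r) (hρ : 0 < ρ)
    (hφ : φ ∈ Ico θ (θ + 2 * Real.pi)) :
    angFrom (circleMap 0 r θ) (circleMap 0 ρ φ) =
      φ - toIcoDiv Real.two_pi_pos 0 θ • (2 * Real.pi) := by
  rw [angFrom, toIcoMod_arg_circleMap hρ, theta_circleMap hr, toIcoMod_sub_zsmul',
    (toIcoMod_eq_self _).2 hφ]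

lemma Bzz_circleMap {r ρ θ φ : ℝ} (hr : 0 < r) (hρ : 0 < ρ) (hφ : φ ∈ Ico θ (θ + 2 * Real.pi)) :
    Bzz (circleMap 0 r θ) (circleMap 0 ρ φ) = polarRect r ρ θ φ := by
  rw [Bzz, norm_circleMap_zero, norm_circleMap_zero, abs_of_pos hr, abs_of_pos hρ,
    angFrom_circleMap hr hρ hφ, theta_circleMap hr, polarRect_sub_zsmul_two_pi]

variable {z : ℂ}

lemma measureReal_Bz (hz₀ : 0 < ‖z‖) (hz₁ : ‖z‖ < 1) :
    dA.real (Bz z) = (1 - ‖z‖) ^ 2 * (1 + 3 * ‖z‖) / 8 := by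
  rw [Bz, measureReal_polarRect hz₀ (by linarith) (by nlinarith [Real.pi_pos])
    (by nlinarith [Real.pi_pos])]
  field_simp
  ring

lemma measureReal_Bz_pos (hz₀ : 0 < ‖z‖) (hz₁ : ‖z‖ < 1) : 0 < dA.real (Bz z) := by
  have := sub_pos.2 hz₁
  rw [measureReal_Bz hz₀ hz₁]
  positivity

lemma mem_Bz_iff (hz₀ : 0 < ‖z‖) {w : ℂ} :
    w ∈ Bz z ↔
      ‖w‖ ∈ Icc ‖z‖ (1 - (1 - ‖z‖) / 2) ∧ angFrom z w ≤ theta z + Real.pi * (1 - ‖z‖) :=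
  mem_polarRect_iff hz₀ (by nlinarith [Real.pi_pos])

lemma isCompact_Bz (z : ℂ) : IsCompact (Bz z) :=
  isCompact_polarRect ..

lemma polarRect_subset_unitDisc {a b : ℝ} (ha : 0 ≤ a) (hb : b < 1) (α β : ℝ) :
    polarRect a b α β ⊆ unitDisc := by
  rw [polarRect_eq_image]
  rintro _ ⟨⟨ρ, φ⟩, ⟨hρ, -⟩, rfl⟩
  rw [unitDisc, mem_ofPred_eq, norm_circleMap_zero, abs_of_nonneg (ha.trans hρ.1)]
  exact hρ.2.trans_lt hb

lemma Bz_subset_unitDisc (hz : z ∈ unitDisc) : Bz z ⊆ unitDisc :=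
  polarRect_subset_unitDisc (norm_nonneg z) (by linarith [show ‖z‖ < 1 from hz]) _ _

lemma integrableOn_polarRect {f : ℂ → ℂ} (hf : LocallyIntegrableOn f unitDisc dA) {a b : ℝ}
    (ha : 0 ≤ a) (hb : b < 1) (α β : ℝ) : IntegrableOn f (polarRect a b α β) dA :=
  hf.integrableOn_compact_subset (polarRect_subset_unitDisc ha hb α β)
    (isCompact_polarRect a b α β)

end Boxes

section AverageMeasurability

lemma measurable_toIcoMod {p : ℝ} (hp : 0 < p) :
    Measurable fun x : ℝ × ℝ ↦ toIcoMod hp x.1 x.2 := by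
  simp only [toIcoMod_eq_add_fract_mul]
  fun_prop

lemma measurable_theta : Measurable theta :=
  (measurable_toIcoMod Real.two_pi_pos).comp (measurable_const.prodMk Complex.measurable_arg)

lemma measurable_angFrom : Measurable fun x : ℂ × ℂ ↦ angFrom x.1 x.2 :=
  (measurable_toIcoMod Real.two_pi_pos).comp <|
    (measurable_theta.comp measurable_fst).prodMk (Complex.measurable_arg.comp measurable_snd)

lemma measurableSet_setOf_snd_mem_Bz :
    MeasurableSet {x : ℂ × ℂ | 0 < ‖x.1‖ ∧ x.2 ∈ Bz x.1} := by
  have heq : {x : ℂ × ℂ | 0 < ‖x.1‖ ∧ x.2 ∈ Bz x.1} =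
      {x | 0 < ‖x.1‖ ∧ (‖x.1‖ ≤ ‖x.2‖ ∧ ‖x.2‖ ≤ 1 - (1 - ‖x.1‖) / 2) ∧
        angFrom x.1 x.2 ≤ theta x.1 + Real.pi * (1 - ‖x.1‖)} := by
    ext x
    exact and_congr_right fun hx ↦ mem_Bz_iff hx
  have := measurable_theta
  have := measurable_angFrom
  rw [heq]
  measurability

lemma aestronglyMeasurable_avg {f : ℂ → ℂ} (hf : LocallyIntegrableOn f unitDisc dA) :
    AEStronglyMeasurable (avg f) (dA.restrict (unitDisc \ {0})) := by
  set F : ℂ × ℂ → ℂ :=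
    {x : ℂ × ℂ | 0 < ‖x.1‖ ∧ x.2 ∈ Bz x.1}.indicator fun x ↦ f x.2 with hF
  have hFmeas : AEStronglyMeasurable F
      ((dA.restrict (unitDisc \ {0})).prod (dA.restrict unitDisc)) :=
    hf.aestronglyMeasurable.comp_snd.indicator measurableSet_setOf_snd_mem_Bz
  have havg : ∀ z ∈ unitDisc \ {0}, ((1 - ‖z‖) ^ 2 * (1 + 3 * ‖z‖) / 8)⁻¹ •
      ∫ w in unitDisc, F (z, w) ∂dA = avg f z := by
    rintro z ⟨hz, hne : z ≠ 0⟩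
    have hz₀ : 0 < ‖z‖ := norm_pos_iff.2 hne
    have hFz : (fun w ↦ F (z, w)) = (Bz z).indicator f := by
      ext w
      by_cases hw : w ∈ Bz z <;> simp [hF, hne, hw]
    rw [hFz, setIntegral_indicator (isCompact_Bz z).measurableSet,
      inter_eq_right.2 (Bz_subset_unitDisc hz), ← measureReal_Bz hz₀ hz]
    rfl
  have hdisc : MeasurableSet (unitDisc \ {0}) :=
    (measurableSet_lt measurable_norm measurable_const).diff (measurableSet_singleton 0)
  have harea : Continuous fun z : ℂ ↦ (1 - ‖z‖) ^ 2 * (1 + 3 * ‖z‖) / 8 := by fun_prop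
  exact (harea.measurable.inv.aestronglyMeasurable.smul hFmeas.integral_prod_right').congr
    (ae_restrict_of_forall_mem hdisc havg)

end AverageMeasurability

/-- The weak oscillation of `f` over `B(z)`, namely the supremum of `wQuot f z` over `B(z)`, is at
most `ε`; stated pointwise so that an infinite supremum is excluded. -/
def WeakOscLE (f : ℂ → ℂ) (z : ℂ) (ε : ℝ) : Prop := ∀ ζ ∈ Bz z, wQuot f z ζ ≤ ε

namespace WeakOscLE

variable {f : ℂ → ℂ} {ε r r' θ θ' : ℝ}

lemma norm_setIntegral_corner_le (hosc : WeakOscLE f (circleMap 0 r θ) ε) (hr₀ : 0 < r)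
    (hr₁ : r < 1) {ρ φ : ℝ} (hρ : ρ ∈ Icc r (1 - (1 - r) / 2))
    (hφ : φ ∈ Icc θ (θ + Real.pi * (1 - r))) :
    ‖∫ w in polarRect r ρ θ φ, (f w - avg f (circleMap 0 r θ)) ∂dA‖ ≤
      dA.real (Bz (circleMap 0 r θ)) * ε := by
  have hnorm : ‖circleMap 0 r θ‖ = r := by rw [norm_circleMap_zero, abs_of_pos hr₀]
  have hB : 0 < dA.real (Bz (circleMap 0 r θ)) := by
    apply measureReal_Bz_pos <;> rwa [hnorm]
  have hmem : circleMap 0 ρ φ ∈ Bz (circleMap 0 r θ) := by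
    rw [Bz_circleMap hr₀]
    exact circleMap_mem_polarRect hρ hφ
  have hφ' : φ ∈ Ico θ (θ + 2 * Real.pi) := ⟨hφ.1, by nlinarith [hφ.2, Real.pi_pos]⟩
  rw [← Bzz_circleMap hr₀ (hr₀.trans_le hρ.1) hφ']
  exact (inv_mul_le_iff₀ hB).1 (hosc _ hmem)

lemma norm_setIntegral_polarRect_le (hosc : WeakOscLE f (circleMap 0 r θ) ε)
    (hf : LocallyIntegrableOn f unitDisc dA) (hε : 0 ≤ ε) (hr₀ : 0 < r) (hr₁ : r < 1)
    {a b α β : ℝ} (hra : r ≤ a) (hab : a ≤ b) (hb : b ≤ 1 - (1 - r) / 2) (hθα : θ ≤ α)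
    (hαβ : α ≤ β) (hβ : β ≤ θ + Real.pi * (1 - r)) :
    ‖∫ w in polarRect a b α β, (f w - avg f (circleMap 0 r θ)) ∂dA‖ ≤ 2 * ε * (1 - r) ^ 2 := by
  have hnorm : ‖circleMap 0 r θ‖ = r := by rw [norm_circleMap_zero, abs_of_pos hr₀]
  have hB : dA.real (Bz (circleMap 0 r θ)) ≤ (1 - r) ^ 2 / 2 := by
    rw [measureReal_Bz (by rwa [hnorm]) (by rwa [hnorm]), hnorm]
    nlinarith [sq_nonneg (1 - r)]
  have hint : IntegrableOn (fun w ↦ f w - avg f (circleMap 0 r θ))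
      (polarRect r (1 - (1 - r) / 2) θ (θ + Real.pi * (1 - r))) dA :=
    (integrableOn_polarRect hf hr₀.le (by linarith) _ _).sub
      (integrableOn_const (isCompact_polarRect ..).measure_ne_top)
  calc _ ≤ 4 * (dA.real (Bz (circleMap 0 r θ)) * ε) :=
        norm_setIntegral_polarRect_le_of_corner hr₀ (by nlinarith [Real.pi_pos]) hint
          (fun ρ hρ φ hφ ↦ hosc.norm_setIntegral_corner_le hr₀ hr₁ hρ hφ) hra hab hb hθα hαβ hβ
    _ ≤ 4 * ((1 - r) ^ 2 / 2 * ε) := by gcongr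
    _ = 2 * ε * (1 - r) ^ 2 := by ring

/-- If the base point of `B(z')` lies in the first two thirds of `B(z)`, the two boxes share a
rectangle of area comparable to both, on which `f` is close on average to `f̂(z)` and `f̂(z')`. -/
lemma norm_avg_sub_avg_le_of_two_thirds (hosc : WeakOscLE f (circleMap 0 r θ) ε)
    (hosc' : WeakOscLE f (circleMap 0 r' θ') ε) (hf : LocallyIntegrableOn f unitDisc dA)
    (hε : 0 ≤ ε) (hr : 1 / 2 ≤ r) (hr₁ : r < 1) (hrr' : r ≤ r')
    (hr' : 2 / 3 * (1 - r) ≤ 1 - r') (hθθ' : θ ≤ θ')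
    (hθ' : θ' ≤ θ + 2 / 3 * (Real.pi * (1 - r))) :
    ‖avg f (circleMap 0 r θ) - avg f (circleMap 0 r' θ')‖ ≤ 144 * ε := by
  have hr₀ : 0 < r := by linarith
  have hr'₀ : 0 < r' := by linarith
  have hr'₁ : r' < 1 := by linarith
  have hwidth : 0 < Real.pi * (1 - r) := mul_pos Real.pi_pos (by linarith)
  have hwidth' : 2 / 3 * (Real.pi * (1 - r)) ≤ Real.pi * (1 - r') := by
    linarith [mul_le_mul_of_nonneg_left hr' Real.pi_pos.le]
  set R := polarRect r' (1 - (1 - r) / 2) θ' (θ' + Real.pi * (1 - r) / 3) with hR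
  have hR_area : (1 - r) ^ 2 / 36 ≤ dA.real R := by
    have hradial : (1 - r) / 6 ≤ (1 - (1 - r) / 2) ^ 2 - r' ^ 2 := by nlinarith
    calc (1 - r) ^ 2 / 36 = (1 - r) / 6 * ((1 - r) / 6) := by ring
      _ ≤ ((1 - (1 - r) / 2) ^ 2 - r' ^ 2) * ((1 - r) / 6) := by gcongr
      _ = dA.real R := by
        rw [hR, measureReal_polarRect hr'₀ (by linarith) (by linarith)
          (by nlinarith [Real.pi_pos])]
        field_simp
        ring
  have hclose : ‖∫ w in R, (f w - avg f (circleMap 0 r θ)) ∂dA‖ ≤ 2 * ε * (1 - r) ^ 2 :=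
    hosc.norm_setIntegral_polarRect_le hf hε hr₀ hr₁ hrr' (by linarith) le_rfl hθθ'
      (by linarith) (by linarith)
  have hclose' : ‖∫ w in R, (f w - avg f (circleMap 0 r' θ')) ∂dA‖ ≤ 2 * ε * (1 - r') ^ 2 :=
    hosc'.norm_setIntegral_polarRect_le hf hε hr'₀ hr'₁ le_rfl (by linarith) (by linarith)
      le_rfl (by linarith) (by linarith)
  refine le_of_mul_le_mul_left ?_ (show 0 < (1 - r) ^ 2 / 36 by nlinarith)
  calc (1 - r) ^ 2 / 36 * ‖avg f (circleMap 0 r θ) - avg f (circleMap 0 r' θ')‖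
      ≤ dA.real R * ‖avg f (circleMap 0 r θ) - avg f (circleMap 0 r' θ')‖ := by gcongr
    _ ≤ 2 * ε * (1 - r) ^ 2 + 2 * ε * (1 - r') ^ 2 :=
        measureReal_mul_norm_sub_le_of_setIntegral_sub (isCompact_polarRect ..).measure_ne_top
          (integrableOn_polarRect hf hr'₀.le (by linarith) _ _) hclose hclose'
    _ ≤ 2 * ε * (1 - r) ^ 2 + 2 * ε * (1 - r) ^ 2 := by gcongr
    _ = (1 - r) ^ 2 / 36 * (144 * ε) := by ring

end WeakOscLE

section WeakOscillation

variable {f : ℂ → ℂ} {ε : ℝ} {z : ℂ}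

/-- The box based at `w` may barely meet `B(z)`, so `f̂(z)` and `f̂(w)` are compared through the
polar midpoint of `z` and `w`; as `1 - ‖z‖ ≤ 2 (1 - ‖w‖)`, each half of the way stays within the
first two thirds of a box. -/
lemma norm_avg_sub_avg_le_of_mem_Bz (hf : LocallyIntegrableOn f unitDisc dA) (hε : 0 ≤ ε)
    (hz : 1 / 2 ≤ ‖z‖) (hz₁ : ‖z‖ < 1)
    (hosc : ∀ w ∈ unitDisc, ‖z‖ ≤ ‖w‖ → WeakOscLE f w ε) {w : ℂ} (hw : w ∈ Bz z) :
    ‖avg f z - avg f w‖ ≤ 288 * ε := by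
  rw [Bz, polarRect_eq_image] at hw
  obtain ⟨⟨ρ, φ⟩, ⟨⟨hzρ, hρ⟩, hθφ, hφ⟩, rfl⟩ := hw
  set r := ‖z‖
  set θ := theta z
  have hwidth : 0 < Real.pi * (1 - r) := mul_pos Real.pi_pos (by linarith)
  have hmid : 3 / 4 * (Real.pi * (1 - r)) ≤ Real.pi * (1 - (r + ρ) / 2) := by
    linarith [mul_le_mul_of_nonneg_left hρ Real.pi_pos.le]
  have hosc' {s : ℝ} (hrs : r ≤ s) (hs : s < 1) (ψ : ℝ) : WeakOscLE f (circleMap 0 s ψ) ε := by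
    have hnorm : ‖circleMap 0 s ψ‖ = s := by
      rw [norm_circleMap_zero, abs_of_nonneg (by linarith)]
    exact hosc _ (hnorm.trans_lt hs) (hrs.trans_eq hnorm.symm)
  have hfirst : ‖avg f (circleMap 0 r θ) - avg f (circleMap 0 ((r + ρ) / 2) ((θ + φ) / 2))‖ ≤
      144 * ε :=
    (hosc' le_rfl hz₁ θ).norm_avg_sub_avg_le_of_two_thirds
      (hosc' (by linarith) (by linarith) _) hf hε hz hz₁ (by linarith) (by linarith)
      (by linarith) (by linarith)
  have hsecond : ‖avg f (circleMap 0 ((r + ρ) / 2) ((θ + φ) / 2)) - avg f (circleMap 0 ρ φ)‖ ≤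
      144 * ε :=
    (hosc' (by linarith) (by linarith) _).norm_avg_sub_avg_le_of_two_thirds
      (hosc' hzρ (by linarith) φ) hf hε (by linarith) (by linarith) (by linarith) (by linarith)
      (by linarith) (by linarith)
  rw [circleMap_norm_theta] at hfirst
  calc ‖avg f z - avg f (circleMap 0 ρ φ)‖ ≤ 144 * ε + 144 * ε :=
        norm_sub_le_norm_sub_add_norm_sub .. |>.trans (add_le_add hfirst hsecond)
    _ = 288 * ε := by ring

lemma Bzz_subset_Bz (hz₀ : 0 < ‖z‖) {ζ : ℂ} (hζ : ζ ∈ Bz z) : Bzz z ζ ⊆ Bz z :=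
  have ⟨hnorm, hang⟩ := (mem_Bz_iff hz₀).1 hζ
  polarRect_subset_polarRect le_rfl hnorm.2 le_rfl hang

lemma norm_setIntegral_sub_avg_le (hf : LocallyIntegrableOn f unitDisc dA) (hε : 0 ≤ ε)
    (hz : 1 / 2 ≤ ‖z‖) (hz₁ : ‖z‖ < 1)
    (hosc : ∀ w ∈ unitDisc, ‖z‖ ≤ ‖w‖ → WeakOscLE f w ε) {ζ : ℂ} (hζ : ζ ∈ Bz z) :
    ‖∫ ξ in Bzz z ζ, (f ξ - avg f ξ) ∂dA‖ ≤ dA.real (Bz z) * (289 * ε) := by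
  have hz₀ : 0 < ‖z‖ := by linarith
  have hsub : Bzz z ζ ⊆ Bz z := Bzz_subset_Bz hz₀ hζ
  have hcpt : IsCompact (Bzz z ζ) := isCompact_polarRect ..
  have hdisc : Bzz z ζ ⊆ unitDisc := hsub.trans (Bz_subset_unitDisc hz₁)
  have hne : Bzz z ζ ⊆ unitDisc \ {0} := fun ξ hξ ↦
    ⟨hdisc hξ, norm_pos_iff.1 (hz₀.trans_le ((mem_Bz_iff hz₀).1 (hsub hξ)).1.1)⟩
  have hosc_z : ‖∫ ξ in Bzz z ζ, (f ξ - avg f z) ∂dA‖ ≤ dA.real (Bz z) * ε :=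
    (inv_mul_le_iff₀ (measureReal_Bz_pos hz₀ hz₁)).1 (hosc z hz₁ le_rfl ζ hζ)
  have hclose : ∀ ξ ∈ Bzz z ζ, ‖avg f z - avg f ξ‖ ≤ 288 * ε := fun ξ hξ ↦
    norm_avg_sub_avg_le_of_mem_Bz hf hε hz hz₁ hosc (hsub hξ)
  have hint : IntegrableOn (fun ξ ↦ f ξ - avg f z) (Bzz z ζ) dA :=
    (hf.integrableOn_compact_subset hdisc hcpt).sub (integrableOn_const hcpt.measure_ne_top)
  have hint_avg : IntegrableOn (fun ξ ↦ avg f z - avg f ξ) (Bzz z ζ) dA :=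
    .of_bound hcpt.measure_lt_top
      (aestronglyMeasurable_const.sub ((aestronglyMeasurable_avg hf).mono_set hne)) (288 * ε)
      (ae_restrict_of_forall_mem hcpt.measurableSet hclose)
  calc ‖∫ ξ in Bzz z ζ, (f ξ - avg f ξ) ∂dA‖
      = ‖(∫ ξ in Bzz z ζ, (f ξ - avg f z) ∂dA) + ∫ ξ in Bzz z ζ, (avg f z - avg f ξ) ∂dA‖ := by
        rw [← integral_add hint hint_avg]
        simp only [sub_add_sub_cancel]
    _ ≤ dA.real (Bz z) * ε + 288 * ε * dA.real (Bzz z ζ) :=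
        norm_add_le_of_le hosc_z (norm_setIntegral_le_of_norm_le_const hcpt.measure_lt_top hclose)
    _ ≤ dA.real (Bz z) * ε + 288 * ε * dA.real (Bz z) := by
        gcongr
        exact (isCompact_Bz z).measure_ne_top
    _ = dA.real (Bz z) * (289 * ε) := by ring

end WeakOscillation

/-- If a locally integrable `f` on `𝔻` satisfies the VWMO condition, then
`f - f̂` satisfies the vanishing averaging condition (4a):
`(1/|B(z)|) sup_{ζ∈B(z)} |∫_{B(z,ζ)} (f(ξ) - f̂(ξ)) dA(ξ)| → 0` as `|z| → 1`. -/
theorem vwmo_sub_avg_vanishing_averaging (f : ℂ → ℂ)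
    (hf : MeasureTheory.LocallyIntegrableOn f unitDisc dA) (hvwmo : IsVWMO f) :
    ∀ ε > (0:ℝ), ∃ r₀ < (1:ℝ), ∀ z ∈ unitDisc, r₀ ≤ ‖z‖ → ∀ ζ ∈ Bz z,
      ((dA (Bz z)).toReal)⁻¹ * ‖∫ ξ in Bzz z ζ, (f ξ - avg f ξ) ∂dA‖ ≤ ε := by
  intro ε hε
  obtain ⟨r₁, hr₁, hosc⟩ := hvwmo (ε / 289) (by positivity)
  refine ⟨max r₁ (1 / 2), max_lt hr₁ (by norm_num), fun z hz hrz ζ hζ ↦ ?_⟩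
  obtain ⟨hr₁z, hz_half⟩ := max_le_iff.1 hrz
  have hbound : ‖∫ ξ in Bzz z ζ, (f ξ - avg f ξ) ∂dA‖ ≤ dA.real (Bz z) * (289 * (ε / 289)) :=
    norm_setIntegral_sub_avg_le hf (by positivity) hz_half hz
      (fun w hw hzw ↦ hosc w hw (hr₁z.trans hzw)) hζ
  rw [mul_div_cancel₀ ε (by norm_num)] at hbound
  exact (inv_mul_le_iff₀ (measureReal_Bz_pos (by linarith) hz)).2 hbound
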